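/- arXiv:2009.11855 — 2 statements merged into one kernel-verified Lean document; each statement's English description precedes it below -/
import Mathlib

section
/- Assume y_0 ≥ 0 and that there exists no nonnegative finite Borel measure on 𝕋 that is feasible. Then (BPC) has a unique solution w*, and w* is of the form w* = Σ_{i=1}^N a_i δ_{x_i} with 1 ≤ N ≤ 2K_c, pairwise distinct x_i ∈ 𝕋, nonzero real weights a_i, at least one a_i > 0 and at least one a_j < 0. -/
open MeasureTheory Complex Real Matrix
open scoped Real ComplexOrder

noncomputable section

instance : Fact (0 < 2 * π) := ⟨by positivity⟩

/-- The circle `𝕋 = ℝ/2πℤ`. -/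
abbrev Circle2pi := AddCircle (2 * π)

/-- The `k`-th Fourier coefficient of a finite signed Borel measure `w` on `𝕋`:
`ŵ[k] = ∫ e^{-ikt} dw⁺(t) - ∫ e^{-ikt} dw⁻(t)`, where `w = w⁺ - w⁻` is the Jordan
decomposition. -/
noncomputable def sFourierCoeff (w : MeasureTheory.SignedMeasure Circle2pi) (k : ℤ) : ℂ :=
  (∫ t, fourier (-k) t ∂w.toJordanDecomposition.posPart)
    - ∫ t, fourier (-k) t ∂w.toJordanDecomposition.negPart

/-- The total variation norm `‖w‖ = w⁺(𝕋) + w⁻(𝕋)`. -/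
noncomputable def tvNorm (w : MeasureTheory.SignedMeasure Circle2pi) : ℝ :=
  (w.totalVariation Set.univ).toReal

/-- `w` is feasible for the data `y` : `ŵ[k] = y k` for all `|k| ≤ K_c`. -/
def Feasible (Kc : ℕ) (y : ℤ → ℂ) (w : MeasureTheory.SignedMeasure Circle2pi) : Prop :=
  ∀ k : ℤ, |k| ≤ (Kc : ℤ) → sFourierCoeff w k = y k

/-- `w` is a solution of the problem (BPC): it is feasible and minimizes the total
variation norm among feasible measures. -/
def IsBPCSolution (Kc : ℕ) (y : ℤ → ℂ) (w : MeasureTheory.SignedMeasure Circle2pi) : Prop :=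
  Feasible Kc y w ∧ ∀ v : MeasureTheory.SignedMeasure Circle2pi, Feasible Kc y v →
    tvNorm w ≤ tvNorm v

/-- The Dirac measure at `x ∈ 𝕋`, viewed as a signed measure. -/
noncomputable def diracSM (x : Circle2pi) : MeasureTheory.SignedMeasure Circle2pi :=
  (MeasureTheory.Measure.dirac x).toSignedMeasure

/-!
With finitely many moments prescribed, the minimal total variation of a feasible measure is the
gauge, at the data, of the absolutely convex hull of the moment curve. A functional `φ` supporting
this hull is a dual certificate: the trigonometric polynomial `p = φ ∘ trigMoment K` satisfies
`|p| ≤ 1`, and complementary slackness puts the positive part of every solution on `{p = 1}` and the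
negative part on `{p = -1}`. Such peaks are critical points of `p`, and `p'` is again a
trigonometric polynomial of degree at most `K`. By the Vandermonde determinant any `2K + 1` points
of the moment curve form a basis, so there are at most `2K` peaks unless `p` is constant, and a
constant `p` would give the solution a sign. The same independence makes the weights on the peaks,
hence the solution, unique.
-/

section ConvexHull

open scoped Pointwise

variable {E : Type*} [AddCommGroup E] [Module ℝ E] {s C : Set E}

theorem exists_dual_le_seminorm_apply_eq (p : Seminorm ℝ E) (b : E) :
    ∃ φ : Module.Dual ℝ E, (∀ x, |φ x| ≤ p x) ∧ φ b = p b := by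
  rcases eq_or_ne b 0 with rfl | hb
  · exact ⟨0, by simp, by simp⟩
  obtain ⟨φ, hφ, hle⟩ := Module.Dual.exists_extension_of_le_seminorm_real
    (ℝ ∙ b) (p b • (LinearEquiv.coord ℝ E b hb).toLinearMap) (p := p) fun x => by
      conv_rhs => rw [← LinearEquiv.coord_apply_smul ℝ E b hb x, map_smul_eq_mul, mul_comm]
      exact mul_le_mul_of_nonneg_left (le_abs_self _) (apply_nonneg p b)
  refine ⟨φ, hle, (hφ ⟨b, Submodule.mem_span_singleton_self b⟩).trans ?_⟩
  rw [LinearMap.smul_apply, LinearEquiv.coe_coe, LinearEquiv.coord_self, smul_eq_mul, mul_one]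

theorem exists_mem_smul_absConvexHull (hne : s.Nonempty) {x : E}
    (hx : x ∈ Submodule.span ℝ s) : ∃ r : ℝ, 0 ≤ r ∧ x ∈ r • absConvexHull ℝ s := by
  induction hx using Submodule.span_induction with
  | mem x hx => exact ⟨1, zero_le_one, by simpa only [one_smul] using subset_absConvexHull hx⟩
  | zero => exact ⟨0, le_rfl, by rw [Set.zero_smul_set hne.absConvexHull, Set.mem_zero]⟩
  | add x y _ _ hx hy =>
    obtain ⟨r, hr, hx⟩ := hx
    obtain ⟨t, ht, hy⟩ := hy
    refine ⟨r + t, add_nonneg hr ht, ?_⟩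
    rw [convex_absConvexHull.add_smul hr ht]
    exact Set.add_mem_add hx hy
  | smul c x _ hx =>
    obtain ⟨r, hr, hx⟩ := hx
    refine ⟨‖c‖ * r, by positivity, ?_⟩
    refine balanced_absConvexHull.smul_mono (a := c * r) (by simp [abs_of_nonneg hr]) ?_
    rw [mul_smul]
    exact Set.smul_mem_smul_set hx

theorem absorbent_absConvexHull (hne : s.Nonempty) (hspan : Submodule.span ℝ s = ⊤) :
    Absorbent ℝ (absConvexHull ℝ s) := by
  refine absorbent_iff_forall_absorbs_singleton.2 fun x => absorbs_iff_norm.2 ?_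
  obtain ⟨r, hr, hx⟩ := exists_mem_smul_absConvexHull hne (hspan ▸ Submodule.mem_top)
  refine ⟨r, fun c hc => Set.singleton_subset_iff.2 (balanced_absConvexHull.smul_mono ?_ hx)⟩
  rwa [Real.norm_of_nonneg hr]

variable [TopologicalSpace E] [IsTopologicalAddGroup E] [ContinuousSMul ℝ E]

theorem mem_gauge_smul_of_isCompact [T2Space E] (hC : IsCompact C) (hconv : Convex ℝ C)
    (habs : Absorbent ℝ C) (b : E) : b ∈ gauge C b • C := by
  rcases eq_or_ne b 0 with rfl | hb
  · rw [gauge_zero, Set.zero_smul_set ⟨_, habs.zero_mem⟩, Set.mem_zero]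
  have hpos : 0 < gauge C b := (gauge_pos habs (hC.isVonNBounded ℝ)).2 hb
  refine (Set.mem_smul_set_iff_inv_smul_mem₀ hpos.ne' _ _).2 <|
    hC.isClosed.closure_subset <| mem_closure_of_gauge_le_one hconv habs.zero_mem habs ?_
  rw [gauge_smul_of_nonneg (inv_nonneg.2 hpos.le), smul_eq_mul, inv_mul_cancel₀ hpos.ne']

variable [FiniteDimensional ℝ E]

theorem isCompact_convexHull (hs : IsCompact s) : IsCompact (convexHull ℝ s) := by
  let combos (n : ℕ) : Set E := (fun q : (Fin n → ℝ) × (Fin n → E) => ∑ i, q.1 i • q.2 i) ''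
    (stdSimplex ℝ (Fin n) ×ˢ Set.univ.pi fun _ => s)
  -- Carathéodory: convex combinations of at most `finrank ℝ E + 1` points suffice.
  suffices convexHull ℝ s = ⋃ n ∈ Finset.range (Module.finrank ℝ E + 2), combos n by
    rw [this]
    exact Finset.isCompact_biUnion _ fun n _ =>
      ((isCompact_stdSimplex ℝ (Fin n)).prod (isCompact_univ_pi fun _ => hs)).image (by fun_prop)
  refine subset_antisymm (fun x hx => ?_) (Set.iUnion₂_subset fun n _ => ?_)
  · obtain ⟨ι, _, z, c, hz, hind, hc, hc1, rfl⟩ := eq_pos_convex_span_of_mem_convexHull hx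
    have e := Fintype.equivFin ι
    have hcard : Fintype.card ι < Module.finrank ℝ E + 2 := Nat.lt_succ_iff.2 <|
      hind.card_le_finrank_succ.trans (add_le_add_left (Submodule.finrank_le _) 1)
    refine Set.mem_biUnion (Finset.mem_coe.2 (Finset.mem_range.2 hcard))
      ⟨(c ∘ e.symm, z ∘ e.symm), ⟨⟨fun i => (hc _).le, (e.symm.sum_comp c).trans hc1⟩,
        fun i _ => hz ⟨_, rfl⟩⟩, e.symm.sum_comp fun i => c i • z i⟩
  · rintro _ ⟨⟨c, z⟩, ⟨hc, hz⟩, rfl⟩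
    exact (convex_convexHull ℝ s).sum_mem (fun i _ => hc.1 i) hc.2
      fun i _ => subset_convexHull ℝ s (hz i trivial)

theorem isCompact_absConvexHull (hs : IsCompact s) : IsCompact (absConvexHull ℝ s) := by
  rw [← convexHull_union_neg_eq_absConvexHull]
  exact isCompact_convexHull (hs.union hs.neg)

theorem exists_dual_le_one_mem_smul_absConvexHull [T2Space E] (hs : IsCompact s)
    (hne : s.Nonempty) (hspan : Submodule.span ℝ s = ⊤) (b : E) :
    ∃ φ : Module.Dual ℝ E, (∀ x ∈ s, |φ x| ≤ 1) ∧ 0 ≤ φ b ∧ b ∈ φ b • absConvexHull ℝ s := by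
  have habs := absorbent_absConvexHull hne hspan
  obtain ⟨φ, hφ, hφb⟩ := exists_dual_le_seminorm_apply_eq
    (gaugeSeminorm balanced_absConvexHull convex_absConvexHull habs) b
  refine ⟨φ, fun x hx => (hφ x).trans (gauge_le_one_of_mem (subset_absConvexHull hx)),
    hφb ▸ apply_nonneg (gaugeSeminorm _ _ habs) b, ?_⟩
  rw [hφb]
  exact mem_gauge_smul_of_isCompact (isCompact_absConvexHull hs) convex_absConvexHull habs b

end ConvexHull

section SignedMeasure

open ContinuousLinearMap VectorMeasure
open scoped Pointwise

local notation:max w "⁺" => JordanDecomposition.posPart (SignedMeasure.toJordanDecomposition w)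
local notation:max w "⁻" => JordanDecomposition.negPart (SignedMeasure.toJordanDecomposition w)

variable {X E : Type*} [MeasurableSpace X]

theorem variation_eq_posPart_add_negPart (w : SignedMeasure X) : w.variation = w⁺ + w⁻ :=
  w.totalVariation_eq_variation.symm

instance isFiniteMeasure_variation (w : SignedMeasure X) : IsFiniteMeasure w.variation :=
  variation_eq_posPart_add_negPart w ▸ inferInstance

theorem variation_smul_real_univ (c : ℝ) (w : SignedMeasure X) :
    (c • w).variation.real Set.univ = |c| * w.variation.real Set.univ := by
  rw [variation_smul, measureReal_nnreal_smul_apply, coe_nnnorm, Real.norm_eq_abs]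

theorem exists_of_ae_negPart_of_not_nonneg {w : SignedMeasure X} {q : X → Prop} (hw : ¬0 ≤ w)
    (hq : ∀ᵐ x ∂w⁻, q x) : ∃ x, q x := by
  have hneg : w⁻ ≠ 0 := fun h => hw fun i hi => by
    rw [w.apply_eq_posPart_real_sub_negPart_real hi, h]
    simp
  have := ae_neBot.2 hneg
  exact hq.exists

theorem exists_of_ae_posPart_of_not_nonpos {w : SignedMeasure X} {q : X → Prop} (hw : ¬w ≤ 0)
    (hq : ∀ᵐ x ∂w⁺, q x) : ∃ x, q x := by
  have hpos : w⁺ ≠ 0 := fun h => hw fun i hi => by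
    rw [w.apply_eq_posPart_real_sub_negPart_real hi, h]
    simp
  have := ae_neBot.2 hpos
  exact hq.exists

theorem ae_variation_of_ae_posPart_negPart {w : SignedMeasure X} {q : X → Prop}
    (hpos : ∀ᵐ x ∂w⁺, q x) (hneg : ∀ᵐ x ∂w⁻, q x) : ∀ᵐ x ∂w.variation, q x := by
  rw [variation_eq_posPart_add_negPart]
  exact ae_add_measure_iff.2 ⟨hpos, hneg⟩

theorem dirac_eq_smul_toSignedMeasure (x : X) (a : ℝ) :
    dirac x a = a • (Measure.dirac x).toSignedMeasure := by
  ext i hi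
  by_cases hx : x ∈ i <;> simp [hi, hx, measureReal_def]

section Integral

variable [NormedAddCommGroup E] [NormedSpace ℝ E] {w : SignedMeasure X}

theorem integral_signedMeasure_eq_sub {f : X → E} (hf : w.Integrable f) :
    ∫ᵛ x, f x ∂<•w = ∫ x, f x ∂w⁺ - ∫ x, f x ∂w⁻ := by
  have hf' : MeasureTheory.Integrable f w.variation := hf
  rw [variation_eq_posPart_add_negPart, integrable_add_measure] at hf'
  conv_lhs => rw [← w.toSignedMeasure_toJordanDecomposition, JordanDecomposition.toSignedMeasure]
  rw [integral_sub_vectorMeasure, integral_toSignedMeasure, integral_toSignedMeasure] <;>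
    rw [VectorMeasure.Integrable, Measure.variation_toSignedMeasure]
  exacts [hf'.1, hf'.2]

theorem integral_clm_comp_signedMeasure {F : Type*} [NormedAddCommGroup F] [NormedSpace ℝ F]
    [CompleteSpace E] [CompleteSpace F] {f : X → E} (hf : w.Integrable f) (L : E →L[ℝ] F) :
    ∫ᵛ x, L (f x) ∂<•w = L (∫ᵛ x, f x ∂<•w) := by
  rw [continuousLinearMap_apply_integral hf, integral_continuousLinearMap_comp hf]
  congr 1
  ext
  simp

theorem abs_integral_le_variation {p : X → ℝ} (hp : ∀ x, |p x| ≤ 1) :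
    |∫ᵛ x, p x ∂<•w| ≤ w.variation.real Set.univ := by
  simpa using VectorMeasure.norm_integral_le_of_norm_le_const (μ := w) (f := p)
    (B := (lsmul ℝ ℝ).flip) (.of_forall hp)

theorem ae_eq_of_variation_le_integral {p : X → ℝ} (hp : ∀ x, |p x| ≤ 1)
    (hpi : w.Integrable p) (hle : w.variation.real Set.univ ≤ ∫ᵛ x, p x ∂<•w) :
    (∀ᵐ x ∂w⁺, p x = 1) ∧ ∀ᵐ x ∂w⁻, p x = -1 := by
  have hpi' : MeasureTheory.Integrable p w.variation := hpi
  rw [variation_eq_posPart_add_negPart, integrable_add_measure] at hpi'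
  have hpos_le : ∫ x, p x ∂w⁺ ≤ w⁺.real Set.univ := by
    simpa using integral_mono hpi'.1 (integrable_const 1) fun x => (abs_le.1 (hp x)).2
  have hneg_ge : -w⁻.real Set.univ ≤ ∫ x, p x ∂w⁻ := by
    simpa using integral_mono (integrable_const (-1)) hpi'.2 fun x => (abs_le.1 (hp x)).1
  rw [integral_signedMeasure_eq_sub hpi, variation_eq_posPart_add_negPart,
    measureReal_add_apply] at hle
  constructor
  · refine (integral_eq_iff_of_ae_le hpi'.1 (integrable_const 1)
      (.of_forall fun x => (abs_le.1 (hp x)).2)).1 (le_antisymm (by simpa using hpos_le) ?_)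
    simp only [MeasureTheory.integral_const, smul_eq_mul, mul_one]
    linarith
  · refine ((integral_eq_iff_of_ae_le (integrable_const (-1)) hpi'.2
      (.of_forall fun x => (abs_le.1 (hp x)).1)).1
        (le_antisymm (by simpa using hneg_ge) ?_)).symm
    simp only [MeasureTheory.integral_const, smul_eq_mul, mul_neg, mul_one]
    linarith

end Integral

section FiniteSupport

variable [MeasurableSingletonClass X] [NormedAddCommGroup E] {S : Finset X}

theorem eq_sum_dirac_of_variation_compl_eq_zero {w : VectorMeasure X E}
    (hS : w.variation (S : Set X)ᶜ = 0) : w = ∑ x ∈ S, dirac x (w {x}) := by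
  classical
  ext i hi
  have hiS : w (i \ S) = 0 := enorm_eq_zero.1 <| le_zero_iff.1 <|
    (enorm_measure_le_variation w _).trans (hS ▸ measure_mono fun _ hx => hx.2)
  have hcover : ⋃ x ∈ S.filter (· ∈ i), {x} = i \ (i \ S) := by
    ext
    simp [and_comm]
  calc w i = w (i \ (i \ S)) := by
        rw [of_sdiff (hi.diff S.measurableSet) hi Set.sdiff_subset, hiS, sub_zero]
    _ = ∑ x ∈ S with x ∈ i, w {x} := by
        rw [← hcover]
        exact of_biUnion_finset (fun x _ y _ hxy => Set.disjoint_singleton.2 hxy)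
          fun x _ => measurableSet_singleton x
    _ = (∑ x ∈ S, dirac x (w {x})) i := by
        rw [Finset.sum_filter, FunLike.coe_sum, Finset.sum_apply]
        refine Finset.sum_congr rfl fun x _ => ?_
        split_ifs with hx
        · rw [dirac_apply_of_mem hi hx]
        · rw [dirac_apply_of_notMem hx]

theorem integral_eq_sum_of_variation_compl_eq_zero [NormedSpace ℝ E] [CompleteSpace E]
    {w : SignedMeasure X} (hS : w.variation (S : Set X)ᶜ = 0) (g : X → E) :
    ∫ᵛ x, g x ∂<•w = ∑ x ∈ S, w {x} • g x := by
  conv_lhs => rw [eq_sum_dirac_of_variation_compl_eq_zero hS]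
  rw [integral_finsetSum_vectorMeasure fun x _ => ?_]
  · simp only [VectorMeasure.integral_dirac, flip_apply, lsmul_apply]
  · rw [VectorMeasure.Integrable, variation_dirac]
    exact (MeasureTheory.integrable_dirac (by simp)).smul_measure (by simp)

theorem exists_singleton_neg_of_not_nonneg {w : SignedMeasure X}
    (hS : w.variation (S : Set X)ᶜ = 0) (hw : ¬0 ≤ w) : ∃ x ∈ S, w {x} < 0 := by
  classical
  by_contra! h
  refine hw ?_
  rw [eq_sum_dirac_of_variation_compl_eq_zero hS]
  refine Finset.sum_nonneg fun x hx i hi => ?_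
  change 0 ≤ dirac x (w {x}) i
  by_cases hxi : x ∈ i
  · exact (h x hx).trans_eq (dirac_apply_of_mem hi hxi).symm
  · exact (dirac_apply_of_notMem hxi).ge

theorem exists_singleton_pos_of_not_nonpos {w : SignedMeasure X}
    (hS : w.variation (S : Set X)ᶜ = 0) (hw : ¬w ≤ 0) : ∃ x ∈ S, 0 < w {x} := by
  simpa using exists_singleton_neg_of_not_nonneg (w := -w) (by rwa [variation_neg])
    (by rwa [neg_nonneg])

theorem exists_eq_sum_smul_dirac {w : SignedMeasure X} (hS : w.variation (S : Set X)ᶜ = 0)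
    (hnonneg : ¬0 ≤ w) (hnonpos : ¬w ≤ 0) :
    ∃ (N : ℕ) (x : Fin N → X) (a : Fin N → ℝ), 1 ≤ N ∧ N ≤ S.card ∧ Function.Injective x ∧
      (∀ i, a i ≠ 0) ∧ (∃ i, 0 < a i) ∧ (∃ j, a j < 0) ∧
      w = ∑ i, a i • (Measure.dirac (x i)).toSignedMeasure := by
  obtain ⟨u, huS, hu⟩ := exists_singleton_pos_of_not_nonpos hS hnonpos
  obtain ⟨v, hvS, hv⟩ := exists_singleton_neg_of_not_nonneg hS hnonneg
  let atoms := S.filter fun x => w {x} ≠ 0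
  let e := atoms.equivFin
  have hatom (x : X) (hxS : x ∈ S) (hx : w {x} ≠ 0) : ∃ i, (e.symm i : X) = x :=
    ⟨e ⟨x, Finset.mem_filter.2 ⟨hxS, hx⟩⟩, by rw [Equiv.symm_apply_apply]⟩
  obtain ⟨i, rfl⟩ := hatom u huS hu.ne'
  obtain ⟨j, rfl⟩ := hatom v hvS hv.ne
  refine ⟨atoms.card, fun i => e.symm i, fun i => w {(e.symm i : X)}, i.pos,
    Finset.card_filter_le _ _, Subtype.val_injective.comp e.symm.injective,
    fun i => (Finset.mem_filter.1 (e.symm i).2).2, ⟨i, hu⟩, ⟨j, hv⟩, ?_⟩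
  simp only [← dirac_eq_smul_toSignedMeasure]
  rw [e.symm.sum_comp fun x : atoms => dirac (x : X) (w {(x : X)}),
    Finset.sum_coe_sort atoms fun x => dirac x (w {x})]
  refine (eq_sum_dirac_of_variation_compl_eq_zero hS).trans
    (Finset.sum_filter_of_ne (p := fun x => w {x} ≠ 0) fun x _ hx hx0 => hx ?_).symm
  rw [hx0, dirac_zero]

end FiniteSupport

section Moments

variable [MeasurableSingletonClass X] [NormedAddCommGroup E] [NormedSpace ℝ E] [CompleteSpace E]

theorem exists_signedMeasure_of_mem_smul_absConvexHull {g : X → E}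
    (hg : ∀ w : SignedMeasure X, w.Integrable g) {b : E} {r : ℝ} (hr : 0 ≤ r)
    (hb : b ∈ r • absConvexHull ℝ (Set.range g)) :
    ∃ w : SignedMeasure X, ∫ᵛ x, g x ∂<•w = b ∧ w.variation.real Set.univ ≤ r := by
  let moments : Set E :=
    {e | ∃ w : SignedMeasure X, ∫ᵛ x, g x ∂<•w = e ∧ w.variation.real Set.univ ≤ 1}
  have hbal : Balanced ℝ moments := by
    rintro c hc _ ⟨_, ⟨w, rfl, hw⟩, rfl⟩
    refine ⟨c • w, integral_smul_vectorMeasure g c, ?_⟩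
    rw [variation_smul_real_univ]
    exact mul_le_one₀ hc measureReal_nonneg hw
  have hconv : Convex ℝ moments := by
    rintro _ ⟨v, rfl, hv⟩ _ ⟨w, rfl, hw⟩ c d hc hd hcd
    refine ⟨c • v + d • w, ?_, ?_⟩
    · rw [integral_add_vectorMeasure (hg _) (hg _), integral_smul_vectorMeasure,
        integral_smul_vectorMeasure]
    · calc (c • v + d • w).variation.real Set.univ
          ≤ ((c • v).variation + (d • w).variation).real Set.univ :=
            ENNReal.toReal_mono (measure_ne_top _ _) (variation_add_le _)
        _ = c * v.variation.real Set.univ + d * w.variation.real Set.univ := by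
            rw [measureReal_add_apply, variation_smul_real_univ, variation_smul_real_univ,
              abs_of_nonneg hc, abs_of_nonneg hd]
        _ ≤ c * 1 + d * 1 := by gcongr
        _ = 1 := by rw [mul_one, mul_one, hcd]
  have hdirac : Set.range g ⊆ moments := by
    rintro _ ⟨x, rfl⟩
    refine ⟨(Measure.dirac x).toSignedMeasure, ?_, ?_⟩
    · rw [integral_toSignedMeasure, MeasureTheory.integral_dirac]
    · rw [Measure.variation_toSignedMeasure, probReal_univ]
  obtain ⟨_, hc, rfl⟩ := hb
  obtain ⟨w, rfl, hw⟩ := absConvexHull_min hdirac ⟨hbal, hconv⟩ hc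
  refine ⟨r • w, integral_smul_vectorMeasure g r, ?_⟩
  rw [variation_smul_real_univ, abs_of_nonneg hr]
  exact mul_le_of_le_one_right hr hw

end Moments

section Duality

variable [TopologicalSpace X] [CompactSpace X] [OpensMeasurableSpace X] [NormedAddCommGroup E]
  {g : X → E}

theorem integrable_signedMeasure_of_continuous (hg : Continuous g) (w : SignedMeasure X) :
    w.Integrable g :=
  hg.integrable_of_hasCompactSupport (.of_compactSpace _)

theorem exists_signedMeasure_and_dual_certificate [NormedSpace ℝ E] [FiniteDimensional ℝ E]
    [MeasurableSingletonClass X] [Nonempty X]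
    (hg : Continuous g) (hspan : Submodule.span ℝ (Set.range g) = ⊤) (b : E) :
    ∃ (w : SignedMeasure X) (φ : E →L[ℝ] ℝ), ∫ᵛ x, g x ∂<•w = b ∧ (∀ x, |φ (g x)| ≤ 1) ∧
      w.variation.real Set.univ ≤ φ b := by
  have : CompleteSpace E := FiniteDimensional.complete ℝ E
  obtain ⟨φ, hφ, hφb, hb⟩ := exists_dual_le_one_mem_smul_absConvexHull
    (isCompact_range hg) (Set.range_nonempty g) hspan b
  obtain ⟨w, hw, hle⟩ := exists_signedMeasure_of_mem_smul_absConvexHull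
    (integrable_signedMeasure_of_continuous hg) hφb hb
  exact ⟨w, LinearMap.toContinuousLinearMap φ, hw, fun x => hφ _ ⟨x, rfl⟩, hle⟩

end Duality

end SignedMeasure

section TrigMoment

theorem eq_zero_of_forall_sum_mul_zpow_eq_zero {F ι : Type*} [Field F] {S : Finset ι} {z c : ι → F}
    (hz : Set.InjOn z S) (hz0 : ∀ x ∈ S, z x ≠ 0) {K : ℕ} (hS : S.card ≤ 2 * K + 1)
    (hc : ∀ k : ℤ, |k| ≤ K → ∑ x ∈ S, c x * z x ^ k = 0) : ∀ x ∈ S, c x = 0 := by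
  let e := S.equivFin.symm
  have hv : (fun i => c (e i) * z (e i) ^ (-K : ℤ)) = 0 := by
    refine Matrix.eq_zero_of_forall_pow_sum_mul_pow_eq_zero (f := fun i => z (e i))
      (fun i j h => e.injective (Subtype.ext (hz (e i).2 (e j).2 h))) fun i => ?_
    have hi := hc (-K + i) (by grind)
    rw [← Finset.sum_coe_sort, ← e.sum_comp] at hi
    simpa only [mul_assoc, ← zpow_natCast, ← zpow_add₀ (hz0 _ (e _).2)] using hi
  intro x hx
  have hx' := congrFun hv (e.symm ⟨x, hx⟩)
  simp only [Equiv.apply_symm_apply, Pi.zero_apply] at hx'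
  exact (mul_eq_zero_iff_right (zpow_ne_zero _ (hz0 x hx))).1 hx'

variable {T : ℝ} {K : ℕ}

theorem fourier_eq_zpow (n : ℤ) (x : AddCircle T) : fourier n x = (x.toCircle : ℂ) ^ n := by
  rw [fourier_apply, AddCircle.toCircle_zsmul, Circle.coe_zpow]

/-- The trigonometric moment curve `x ↦ (1, e^{-ix}, …, e^{-iKx})` (with `x` rescaled from period
`T` to period `2π`). Integrating it against a real measure gives the Fourier coefficients of index
`0, …, K`, which determine those of negative index; real linear functionals on the curve are the
real trigonometric polynomials of degree at most `K`. -/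
def trigMoment (K : ℕ) (x : AddCircle T) : ℝ × (Fin K → ℂ) :=
  (1, fun k => fourier (-(k + 1 : ℤ)) x)

@[fun_prop]
theorem continuous_trigMoment (K : ℕ) : Continuous (trigMoment K : AddCircle T → _) := by
  unfold trigMoment
  fun_prop

theorem finrank_trigMoment_codomain (K : ℕ) :
    Module.finrank ℝ (ℝ × (Fin K → ℂ)) = 2 * K + 1 := by
  rw [Module.finrank_prod, Module.finrank_self, Module.finrank_pi_fintype]
  simp only [Complex.finrank_real_complex, Finset.sum_const, Finset.card_univ, Fintype.card_fin,
    smul_eq_mul]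
  ring

theorem sum_mul_fourier_eq_zero {S : Finset (AddCircle T)} {b : AddCircle T → ℝ}
    (hb : ∑ x ∈ S, b x • trigMoment K x = 0) (k : ℤ) (hk : |k| ≤ K) :
    ∑ x ∈ S, (b x : ℂ) * fourier k x = 0 := by
  have hneg (n : ℕ) (hn : n ≤ K) : ∑ x ∈ S, (b x : ℂ) * fourier (-n : ℤ) x = 0 := by
    rcases n with _ | n
    · simpa [trigMoment, Prod.fst_sum, ← Complex.ofReal_sum] using congrArg Prod.fst hb
    · simpa [trigMoment, Prod.snd_sum, -fourier_apply] using congrFun (congrArg Prod.snd hb) ⟨n, hn⟩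
  obtain ⟨n, rfl | rfl⟩ := k.eq_nat_or_neg
  · have h := congrArg (starRingEnd ℂ) (hneg n (by simpa using hk))
    simpa only [map_sum, map_mul, Complex.conj_ofReal, ← fourier_neg, neg_neg, map_zero] using h
  · exact hneg n (by simpa using hk)

/-- The velocity of the moment curve as a function of position: `trigMoment K` is an orbit of the
linear flow generated by `trigMomentDeriv T K`. -/
def trigMomentDeriv (T : ℝ) (K : ℕ) : (ℝ × (Fin K → ℂ)) →ₗ[ℝ] ℝ × (Fin K → ℂ) :=
  LinearMap.prodMap 0 (LinearMap.pi fun k =>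
    LinearMap.mulLeft ℝ (-2 * π * I * (k + 1 : ℤ) / T) ∘ₗ LinearMap.proj k)

theorem hasDerivAt_trigMoment (t : ℝ) :
    HasDerivAt (fun s : ℝ => trigMoment K (s : AddCircle T))
      (trigMomentDeriv T K (trigMoment K (t : AddCircle T))) t :=
  (hasDerivAt_const t 1).prodMk <| hasDerivAt_pi.2 fun k => hasDerivAt_fourier_neg T (k + 1 : ℤ) t

variable {φ : (ℝ × (Fin K → ℂ)) →L[ℝ] ℝ}

theorem hasDerivAt_clm_trigMoment (t : ℝ) :
    HasDerivAt (fun s : ℝ => φ (trigMoment K (s : AddCircle T)))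
      (φ (trigMomentDeriv T K (trigMoment K (t : AddCircle T)))) t :=
  φ.hasFDerivAt.comp_hasDerivAt t (hasDerivAt_trigMoment t)

theorem clm_trigMomentDeriv_eq_zero_of_abs_eq_one
    (hφ : ∀ x : AddCircle T, |φ (trigMoment K x)| ≤ 1) {x : AddCircle T}
    (hx : |φ (trigMoment K x)| = 1) : φ (trigMomentDeriv T K (trigMoment K x)) = 0 := by
  obtain ⟨t, rfl⟩ := QuotientAddGroup.mk_surjective x
  refine IsLocalExtr.hasDerivAt_eq_zero (f := fun s : ℝ => φ (trigMoment K (s : AddCircle T))) ?_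
    (hasDerivAt_clm_trigMoment t)
  rcases eq_or_eq_neg_of_abs_eq hx with h | h
  · exact .inr (.of_forall fun s => (abs_le.1 (hφ s)).2.trans_eq h.symm)
  · exact .inl (.of_forall fun s => h.trans_le (abs_le.1 (hφ s)).1)

theorem clm_trigMoment_eq_const_of_deriv_eq_zero
    (hφ : (φ : (ℝ × (Fin K → ℂ)) →ₗ[ℝ] ℝ) ∘ₗ trigMomentDeriv T K = 0) (x y : AddCircle T) :
    φ (trigMoment K x) = φ (trigMoment K y) := by
  obtain ⟨t, rfl⟩ := QuotientAddGroup.mk_surjective x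
  obtain ⟨s, rfl⟩ := QuotientAddGroup.mk_surjective y
  have hderiv (u : ℝ) := hasDerivAt_clm_trigMoment (φ := φ) (T := T) u
  exact is_const_of_deriv_eq_zero (fun u => (hderiv u).differentiableAt)
    (fun u => (hderiv u).deriv.trans (LinearMap.congr_fun hφ _)) t s

theorem linearIndepOn_trigMoment [Fact (0 < T)] {S : Finset (AddCircle T)}
    (hS : S.card ≤ 2 * K + 1) : LinearIndepOn ℝ (trigMoment K) (S : Set (AddCircle T)) := by
  refine linearIndepOn_finset_iff.2 fun b hb x hx => Complex.ofReal_eq_zero.1 ?_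
  refine eq_zero_of_forall_sum_mul_zpow_eq_zero (c := fun x => (b x : ℂ))
    (z := fun x : AddCircle T => (x.toCircle : ℂ))
    (Circle.coe_injective.comp (AddCircle.injective_toCircle (Fact.out : 0 < T).ne')).injOn
    (fun x _ => Circle.coe_ne_zero _) hS (fun k hk => ?_) x hx
  simpa only [fourier_eq_zpow] using sum_mul_fourier_eq_zero hb k hk

variable [hT : Fact (0 < T)]

theorem span_trigMoment_image_eq_top {P : Set (AddCircle T)} (hP : 2 * K + 1 ≤ P.encard) :
    Submodule.span ℝ (trigMoment K '' P) = ⊤ := by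
  obtain ⟨S, hSP, hS⟩ := Set.exists_subset_encard_eq hP
  lift S to Finset (AddCircle T) using Set.finite_of_encard_eq_coe (k := 2 * K + 1) hS
  replace hS : S.card = 2 * K + 1 := by exact_mod_cast Set.encard_coe_eq_coe_finsetCard S ▸ hS
  have hcard : Fintype.card S = Module.finrank ℝ (ℝ × (Fin K → ℂ)) := by
    rw [finrank_trigMoment_codomain, Fintype.card_coe, hS]
  rw [eq_top_iff, ← (linearIndepOn_trigMoment hS.le).span_eq_top_of_card_eq_finrank' hcard]
  refine Submodule.span_mono ?_
  rintro _ ⟨x, rfl⟩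
  exact ⟨x, hSP x.2, rfl⟩

theorem span_range_trigMoment_eq_top :
    Submodule.span ℝ (Set.range (trigMoment K : AddCircle T → _)) = ⊤ := by
  have : Infinite (AddCircle T) := (AddCircle.equivIco T 0).infinite_iff.2
    (Set.Ico_infinite (by simpa using hT.out)).to_subtype
  rw [← Set.image_univ]
  exact span_trigMoment_image_eq_top (Set.encard_univ _ ▸ by simp)

theorem encard_setOf_trigMoment_eq_zero_le {ψ : Module.Dual ℝ (ℝ × (Fin K → ℂ))} (hψ : ψ ≠ 0) :
    {x : AddCircle T | ψ (trigMoment K x) = 0}.encard ≤ 2 * K := by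
  contrapose! hψ
  refine LinearMap.ext_on (span_trigMoment_image_eq_top (Order.add_one_le_of_lt hψ)) ?_
  rintro _ ⟨x, hx, rfl⟩
  exact hx

theorem eq_const_or_exists_finset_peaks (hφ : ∀ x : AddCircle T, |φ (trigMoment K x)| ≤ 1) :
    (∀ x y : AddCircle T, φ (trigMoment K x) = φ (trigMoment K y)) ∨
      ∃ S : Finset (AddCircle T), S.card ≤ 2 * K ∧ ∀ x, |φ (trigMoment K x)| = 1 → x ∈ S := by
  by_cases hderiv : (φ : (ℝ × (Fin K → ℂ)) →ₗ[ℝ] ℝ) ∘ₗ trigMomentDeriv T K = 0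
  · exact .inl (clm_trigMoment_eq_const_of_deriv_eq_zero hderiv)
  have hle := encard_setOf_trigMoment_eq_zero_le (T := T) hderiv
  have hfin : {x : AddCircle T | _}.Finite := Set.finite_of_encard_le_coe (k := 2 * K) hle
  refine .inr ⟨hfin.toFinset, ?_, fun x hx =>
    hfin.mem_toFinset.2 (clm_trigMomentDeriv_eq_zero_of_abs_eq_one hφ hx)⟩
  rw [hfin.encard_eq_coe_toFinset_card] at hle
  exact_mod_cast hle

theorem eq_of_integral_trigMoment_eq {v w : SignedMeasure (AddCircle T)}
    {S : Finset (AddCircle T)} (hS : S.card ≤ 2 * K + 1) (hv : v.variation (S : Set _)ᶜ = 0)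
    (hw : w.variation (S : Set _)ᶜ = 0)
    (h : ∫ᵛ x, trigMoment K x ∂<•v = ∫ᵛ x, trigMoment K x ∂<•w) : v = w := by
  rw [integral_eq_sum_of_variation_compl_eq_zero hv, integral_eq_sum_of_variation_compl_eq_zero hw,
    ← sub_eq_zero, ← Finset.sum_sub_distrib] at h
  simp only [← sub_smul] at h
  have hvw := linearIndepOn_finset_iff.1 (linearIndepOn_trigMoment hS) (fun x => v {x} - w {x}) h
  rw [eq_sum_dirac_of_variation_compl_eq_zero hv, eq_sum_dirac_of_variation_compl_eq_zero hw]
  exact Finset.sum_congr rfl fun x hx => by rw [sub_eq_zero.1 (hvw x hx)]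

end TrigMoment

section BPC

variable {Kc : ℕ} {y : ℤ → ℂ} {w : SignedMeasure Circle2pi}

/-- The Fourier coefficients of index `0, …, K` of a real measure, packed as a point of the space
where the moment curve `trigMoment K` lives. -/
def momentVector (K : ℕ) (y : ℤ → ℂ) : ℝ × (Fin K → ℂ) :=
  ((y 0).re, fun k => y (k + 1 : ℤ))

theorem momentVector_eq_iff {K : ℕ} {y z : ℤ → ℂ}
    (hy : ∀ k : ℤ, |k| ≤ (K : ℤ) → y (-k) = starRingEnd ℂ (y k))
    (hz : ∀ k : ℤ, |k| ≤ (K : ℤ) → z (-k) = starRingEnd ℂ (z k)) :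
    momentVector K y = momentVector K z ↔ ∀ k : ℤ, |k| ≤ (K : ℤ) → y k = z k := by
  refine ⟨fun h => ?_, fun h => Prod.ext ?_ (funext fun k => h _ (by grind))⟩
  · have hnat (n : ℕ) (hn : n ≤ K) : y n = z n := by
      rcases n with _ | n
      · rw [Nat.cast_zero, ← Complex.conj_eq_iff_re.1 (hy 0 (by simp)).symm,
          ← Complex.conj_eq_iff_re.1 (hz 0 (by simp)).symm]
        exact congrArg Complex.ofReal (congrArg Prod.fst h)
      · simpa [momentVector] using congrFun (congrArg Prod.snd h) ⟨n, hn⟩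
    intro k hk
    obtain ⟨n, rfl | rfl⟩ := k.eq_nat_or_neg
    · exact hnat n (by simpa using hk)
    · rw [abs_neg] at hk
      rw [hy n hk, hz n hk, hnat n (by simpa using hk)]
  · exact congrArg Complex.re (h 0 (by simp))

theorem tvNorm_eq_variation (w : SignedMeasure Circle2pi) :
    tvNorm w = w.variation.real Set.univ := by
  rw [tvNorm, w.totalVariation_eq_variation, measureReal_def]

theorem sFourierCoeff_eq_integral (w : SignedMeasure Circle2pi) (k : ℤ) :
    sFourierCoeff w k = ∫ᵛ x, fourier (-k) x ∂<•w :=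
  (integral_signedMeasure_eq_sub
    (integrable_signedMeasure_of_continuous (fourier (-k)).continuous w)).symm

theorem sFourierCoeff_neg (w : SignedMeasure Circle2pi) (k : ℤ) :
    sFourierCoeff w (-k) = starRingEnd ℂ (sFourierCoeff w k) := by
  simp only [sFourierCoeff, map_sub, ← integral_conj, ← fourier_neg]

theorem integral_trigMoment (K : ℕ) (w : SignedMeasure Circle2pi) :
    ∫ᵛ x, trigMoment K x ∂<•w = momentVector K (sFourierCoeff w) := by
  have hint := integrable_signedMeasure_of_continuous (continuous_trigMoment K) w
  refine Prod.ext ?_ (funext fun k => ?_)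
  · rw [momentVector, sFourierCoeff_eq_integral, ← Complex.reCLM_apply,
      ← integral_clm_comp_signedMeasure
        (integrable_signedMeasure_of_continuous (fourier (-0)).continuous w)]
    refine (integral_clm_comp_signedMeasure hint (.fst ℝ ℝ (Fin K → ℂ))).symm.trans ?_
    simp [trigMoment]
  · change (∫ᵛ x, trigMoment K x ∂<•w).2 k = sFourierCoeff w (k + 1 : ℤ)
    rw [sFourierCoeff_eq_integral]
    exact (integral_clm_comp_signedMeasure hint
      (.comp (.proj k) (.snd ℝ ℝ (Fin K → ℂ)))).symm

theorem feasible_iff_integral_trigMoment_eq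
    (hsym : ∀ k : ℤ, |k| ≤ (Kc : ℤ) → y (-k) = starRingEnd ℂ (y k)) :
    Feasible Kc y w ↔ ∫ᵛ x, trigMoment Kc x ∂<•w = momentVector Kc y := by
  rw [integral_trigMoment, momentVector_eq_iff (fun k _ => sFourierCoeff_neg w k) hsym, Feasible]

theorem Feasible.apply_univ (hw : Feasible Kc y w) : w Set.univ = (y 0).re := by
  rw [← hw 0 (by simp), sFourierCoeff, w.apply_eq_posPart_real_sub_negPart_real .univ]
  simp

theorem Feasible.nonneg_of_nonpos (hw : Feasible Kc y w) (hnonpos : w ≤ 0)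
    (hy0 : 0 ≤ (y 0).re) : 0 ≤ w := by
  intro i hi
  have hcompl : w iᶜ ≤ 0 := hnonpos iᶜ hi.compl
  rw [VectorMeasure.of_compl hi, hw.apply_univ] at hcompl
  change 0 ≤ w i
  linarith

theorem exists_isBPCSolution_and_certificate
    (hsym : ∀ k : ℤ, |k| ≤ (Kc : ℤ) → y (-k) = starRingEnd ℂ (y k)) :
    ∃ (w : SignedMeasure Circle2pi) (φ : (ℝ × (Fin Kc → ℂ)) →L[ℝ] ℝ), IsBPCSolution Kc y w ∧
      (∀ x : Circle2pi, |φ (trigMoment Kc x)| ≤ 1) ∧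
        ∀ v : SignedMeasure Circle2pi, IsBPCSolution Kc y v →
          (∀ᵐ x ∂v.toJordanDecomposition.posPart, φ (trigMoment Kc x) = 1) ∧
            ∀ᵐ x ∂v.toJordanDecomposition.negPart, φ (trigMoment Kc x) = -1 := by
  obtain ⟨w, φ, hwy, hφ, hle⟩ := exists_signedMeasure_and_dual_certificate
    (X := Circle2pi) (continuous_trigMoment Kc) span_range_trigMoment_eq_top (momentVector Kc y)
  have hw : Feasible Kc y w := (feasible_iff_integral_trigMoment_eq hsym).2 hwy
  have hpair (v : SignedMeasure Circle2pi) (hv : Feasible Kc y v) :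
      ∫ᵛ x, φ (trigMoment Kc x) ∂<•v = φ (momentVector Kc y) := by
    rw [integral_clm_comp_signedMeasure
      (integrable_signedMeasure_of_continuous (continuous_trigMoment Kc) v),
      (feasible_iff_integral_trigMoment_eq hsym).1 hv]
  refine ⟨w, φ, ⟨hw, fun v hv => ?_⟩, hφ, fun v hv => ae_eq_of_variation_le_integral hφ
    (integrable_signedMeasure_of_continuous (by fun_prop) v) ?_⟩
  · rw [tvNorm_eq_variation, tvNorm_eq_variation]
    exact (hle.trans_eq (hpair v hv).symm).trans
      ((le_abs_self _).trans (abs_integral_le_variation hφ))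
  · rw [hpair v hv.1]
    exact (by simpa only [tvNorm_eq_variation] using hv.2 w hw : _ ≤ _).trans hle

theorem unique_sparse_solution_of_no_nonneg_feasible_general (Kc : ℕ) (y : ℤ → ℂ)
    (hsym : ∀ k : ℤ, |k| ≤ (Kc : ℤ) → y (-k) = starRingEnd ℂ (y k))
    (hno_nonneg : ¬ ∃ w₀ : SignedMeasure Circle2pi, 0 ≤ w₀ ∧ Feasible Kc y w₀)
    (hno_nonpos : ¬ ∃ w₀ : SignedMeasure Circle2pi, w₀ ≤ 0 ∧ Feasible Kc y w₀) :
    ∃ w' : SignedMeasure Circle2pi, IsBPCSolution Kc y w' ∧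
      (∀ w : SignedMeasure Circle2pi, IsBPCSolution Kc y w → w = w') ∧
      ∃ (N : ℕ) (x : Fin N → Circle2pi) (a : Fin N → ℝ),
        1 ≤ N ∧ N ≤ 2 * Kc ∧ Function.Injective x ∧ (∀ i, a i ≠ 0) ∧
        (∃ i, 0 < a i) ∧ (∃ j, a j < 0) ∧
        w' = ∑ i, a i • diracSM (x i) := by
  obtain ⟨w, φ, hw, hφ, hslack⟩ := exists_isBPCSolution_and_certificate hsym
  have hnonneg : ¬0 ≤ w := fun h => hno_nonneg ⟨w, h, hw.1⟩
  have hnonpos : ¬w ≤ 0 := fun h => hno_nonpos ⟨w, h, hw.1⟩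
  rcases eq_const_or_exists_finset_peaks hφ with hconst | ⟨S, hScard, hpeaks⟩
  · obtain ⟨x, hx⟩ := exists_of_ae_posPart_of_not_nonpos hnonpos (hslack w hw).1
    obtain ⟨z, hz⟩ := exists_of_ae_negPart_of_not_nonneg hnonneg (hslack w hw).2
    linarith [hconst x z]
  have hsupp (v : SignedMeasure Circle2pi) (hv : IsBPCSolution Kc y v) :
      v.variation (S : Set Circle2pi)ᶜ = 0 :=
    mem_ae_iff.1 <| ae_variation_of_ae_posPart_negPart
      ((hslack v hv).1.mono fun x hx => hpeaks x (by simp [hx]))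
      ((hslack v hv).2.mono fun x hx => hpeaks x (by simp [hx]))
  obtain ⟨N, x, a, hN, hNS, h⟩ := exists_eq_sum_smul_dirac (hsupp w hw) hnonneg hnonpos
  refine ⟨w, hw, fun v hv => ?_, N, x, a, hN, hNS.trans hScard, h⟩
  refine eq_of_integral_trigMoment_eq (K := Kc) (by lia) (hsupp v hv) (hsupp w hw) ?_
  rw [(feasible_iff_integral_trigMoment_eq hsym).1 hv.1,
    (feasible_iff_integral_trigMoment_eq hsym).1 hw.1]

end BPC

/-- If `y 0 ≥ 0` and there is no nonnegative feasible measure, then (BPC) has a unique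
solution, composed of at most `2 K_c` Dirac masses with at least one positive and one
negative weight. -/
theorem unique_sparse_solution_of_no_nonneg_feasible (Kc : ℕ) (hKc : 1 ≤ Kc) (y : ℤ → ℂ)
    (hsym : ∀ k : ℤ, |k| ≤ (Kc : ℤ) → y (-k) = starRingEnd ℂ (y k))
    (hy0 : 0 ≤ (y 0).re)
    (hno : ¬ ∃ w₀ : MeasureTheory.SignedMeasure Circle2pi, 0 ≤ w₀ ∧ Feasible Kc y w₀) :
    ∃ w' : MeasureTheory.SignedMeasure Circle2pi,
      IsBPCSolution Kc y w' ∧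
      (∀ w : MeasureTheory.SignedMeasure Circle2pi, IsBPCSolution Kc y w → w = w') ∧
      ∃ (N : ℕ) (x : Fin N → Circle2pi) (a : Fin N → ℝ),
        1 ≤ N ∧ N ≤ 2 * Kc ∧ Function.Injective x ∧ (∀ i, a i ≠ 0) ∧
        (∃ i, 0 < a i) ∧ (∃ j, a j < 0) ∧
        w' = ∑ i, a i • diracSM (x i) :=
  unique_sparse_solution_of_no_nonneg_feasible_general Kc y hsym hno fun ⟨w, hw, hfeas⟩ =>
    hno ⟨w, hfeas.nonneg_of_nonpos hw hy0, hfeas⟩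
end
end

section
/- If the Hermitian Toeplitz matrix T_y is positive semidefinite and rank(T_y) ≤ K_c (rank deficient), then (BPC) has a unique solution w*, and w* = Σ_{i=1}^r a_i δ_{x_i} where r = rank(T_y), the x_i ∈ 𝕋 are pairwise distinct and all weights a_i are strictly positive. (Respectively, if T_y is negative semidefinite and rank deficient, the unique solution consists of exactly rank(T_y) Dirac masses with strictly negative weights.) -/
open MeasureTheory Complex Real Matrix
open scoped Real ComplexOrder

noncomputable section

/-- The Hermitian Toeplitz matrix `T_y` with entries `(T_y)_{i,j} = y_{j-i}`. -/
def Ty (Kc : ℕ) (y : ℤ → ℂ) : Matrix (Fin (Kc + 1)) (Fin (Kc + 1)) ℂ :=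
  Matrix.of fun i j => y ((j : ℤ) - (i : ℤ))

/-!
A positive semidefinite Toeplitz matrix `T_y` is a Gram matrix, and spectral theory of the shift
produces a positive measure `μ` with the moments `y` (Carathéodory–Toeplitz). For every such `μ`,
`⟪c, T_y c⟫ = ∫ |P_c|² dμ`, where `P_c` is the trigonometric polynomial with coefficients `c`, so
the kernel of `T_y` consists of the polynomials vanishing `μ`-almost everywhere. If `T_y` is rank
deficient, one nonzero `P_c` confines all these measures to its at most `K_c` zeros; interpolation
there by trigonometric polynomials then shows that `μ` is unique and has exactly `rank T_y` atoms.

The mass `w⁺(𝕋) - w⁻(𝕋) = y₀` is the same for all feasible `w`, so that `‖w‖ = y₀ + 2 w⁻(𝕋)`: once a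
positive feasible measure exists, the solutions of (BPC) are exactly the positive feasible measures.
-/

theorem integrable_of_continuous {X E : Type*} [TopologicalSpace X] [CompactSpace X]
    [MeasurableSpace X] [OpensMeasurableSpace X] [NormedAddCommGroup E]
    [SecondCountableTopologyEither X E] {μ : Measure X} [IsFiniteMeasure μ] {f : X → E}
    (hf : Continuous f) : Integrable f μ :=
  hf.integrable_of_hasCompactSupport (.of_compactSpace f)

section FinitelySupportedMeasure

variable {α : Type*} [MeasurableSpace α] {μ : Measure α} {S : Finset α}

theorem ae_iff_forall_mem_atoms (hS : μ (S : Set α)ᶜ = 0) (hatom : ∀ x ∈ S, μ {x} ≠ 0)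
    {p : α → Prop} : (∀ᵐ x ∂μ, p x) ↔ ∀ x ∈ S, p x := by
  refine ⟨fun h x hx => ?_, fun h => ?_⟩
  · by_contra hp
    exact hatom x hx (measure_mono_null (Set.singleton_subset_iff.2 hp) h)
  · exact measure_mono_null (fun x hx hxS => hx (h x hxS)) hS

variable [MeasurableSingletonClass α]

theorem exists_subset_atoms_of_measure_compl_eq_zero (hS : μ (S : Set α)ᶜ = 0) :
    ∃ R ⊆ S, μ (R : Set α)ᶜ = 0 ∧ ∀ x ∈ R, μ {x} ≠ 0 := by
  classical
  refine ⟨S.filter (μ {·} ≠ 0), S.filter_subset _, ?_, fun x hx => (Finset.mem_filter.1 hx).2⟩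
  have hnull : μ (S.filter (μ {·} = 0)) = 0 := by
    rw [← sum_measure_singleton]
    exact Finset.sum_eq_zero fun x hx => (Finset.mem_filter.1 hx).2
  refine measure_mono_null (fun x hx => ?_) (measure_union_null hS hnull)
  by_cases x ∈ S <;> simp_all

theorem toSignedMeasure_eq_sum_smul_dirac [IsFiniteMeasure μ] (hS : μ (S : Set α)ᶜ = 0) :
    μ.toSignedMeasure = ∑ x ∈ S, μ.real {x} • (Measure.dirac x).toSignedMeasure := by
  classical
  ext A hA
  have hAS : μ.real A = μ.real (S.filter (· ∈ A)) := by
    refine measureReal_congr (Filter.eventuallyEq_set.2 ?_)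
    filter_upwards [show ∀ᵐ x ∂μ, x ∈ S from hS] with x hx
    simp [hx]
  rw [Measure.toSignedMeasure_apply_measurable hA, hAS, ← sum_measureReal_singleton,
    Finset.sum_filter]
  simp [Measure.toSignedMeasure_apply_measurable hA, measureReal_def, hA, Set.indicator_apply,
    apply_ite]

end FinitelySupportedMeasure

theorem finrank_range_eq_of_ker_eq {R M N N' : Type*} [Ring R] [AddCommGroup M] [AddCommGroup N]
    [AddCommGroup N'] [Module R M] [Module R N] [Module R N'] {f : M →ₗ[R] N} {g : M →ₗ[R] N'}
    (h : f.ker = g.ker) : Module.finrank R f.range = Module.finrank R g.range :=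
  (f.quotKerEquivRange.symm.trans <|
    (Submodule.quotEquivOfEq _ _ h).trans g.quotKerEquivRange).finrank_eq

theorem matrix_rank_neg {m n R : Type*} [Fintype n] [CommRing R] (A : Matrix m n R) :
    (-A).rank = A.rank :=
  finrank_range_eq_of_ker_eq (by ext v; simp)

theorem exists_mulVec_eq_zero_of_rank_lt {m n R : Type*} [Fintype n] [CommRing R] [Nontrivial R]
    {A : Matrix m n R} (hA : A.rank < Fintype.card n) : ∃ v ≠ 0, A *ᵥ v = 0 := by
  by_contra! h
  have hker : A.mulVecLin.ker = ⊥ := LinearMap.ker_eq_bot'.2 fun v => not_imp_not.1 (h v)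
  have hrank : A.rank = Module.finrank R (n → R) :=
    LinearMap.finrank_range_of_inj (LinearMap.ker_eq_bot.1 hker)
  exact hA.ne (hrank.trans (Module.finrank_fintype_fun_eq_card R))

section InnerProductSpace

open Module.End

variable {𝕜 V : Type*} [RCLike 𝕜] [NormedAddCommGroup V] [InnerProductSpace 𝕜 V]

open scoped MatrixOrder in
theorem exists_gram_eq_of_posSemidef {ι : Type*} [Fintype ι] {A : Matrix ι ι 𝕜}
    (hA : A.PosSemidef) : ∃ v : ι → EuclideanSpace 𝕜 ι, gram 𝕜 v = A := by
  classical
  obtain ⟨B, rfl⟩ := CStarAlgebra.nonneg_iff_eq_star_mul_self.1 hA.nonneg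
  refine ⟨fun j => WithLp.toLp 2 fun k => B k j, ?_⟩
  ext i j
  simp [gram_apply, PiLp.inner_apply, Matrix.mul_apply, star_apply, mul_comm]

theorem norm_linearCombination_eq_of_gram_eq {ι : Type*} {f g : ι → V}
    (h : gram 𝕜 f = gram 𝕜 g) (c : ι →₀ 𝕜) :
    ‖Finsupp.linearCombination 𝕜 f c‖ = ‖Finsupp.linearCombination 𝕜 g c‖ := by
  have hfg (i j : ι) : inner 𝕜 (f i) (f j) = inner 𝕜 (g i) (g j) := congrFun₂ h i j
  simp only [@norm_eq_sqrt_re_inner 𝕜, Finsupp.linearCombination_apply, Finsupp.sum_inner,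
    Finsupp.inner_sum, inner_smul_left, inner_smul_right, hfg]

theorem exists_linearIsometry_of_gram_eq [FiniteDimensional 𝕜 V] {ι : Type*} {f g : ι → V}
    (h : gram 𝕜 f = gram 𝕜 g) : ∃ U : V →ₗᵢ[𝕜] V, ∀ i, U (f i) = g i := by
  let F := Finsupp.linearCombination 𝕜 f
  let G := Finsupp.linearCombination 𝕜 g
  have hnorm (c : ι →₀ 𝕜) : ‖F c‖ = ‖G c‖ := norm_linearCombination_eq_of_gram_eq h c
  obtain ⟨s, hs⟩ := F.rangeRestrict.exists_rightInverse_of_surjective F.range_rangeRestrict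
  have hFs (v : LinearMap.range F) : F (s v) = v := congrArg Subtype.val (LinearMap.congr_fun hs v)
  have hGs (c : ι →₀ 𝕜) : G (s ⟨F c, c, rfl⟩) = G c := by
    rw [← sub_eq_zero, ← map_sub, ← norm_eq_zero, ← hnorm, map_sub, hFs, sub_self, norm_zero]
  let L : LinearMap.range F →ₗᵢ[𝕜] V :=
    ⟨G ∘ₗ s, fun v => by rw [LinearMap.comp_apply, ← hnorm, hFs, Submodule.coe_norm]⟩
  refine ⟨L.extend, fun i => ?_⟩
  have hL := (L.extend_apply ⟨F (.single i 1), _, rfl⟩).trans (hGs (.single i 1))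
  simpa [F, G] using hL

theorem isSemisimple_of_linearIsometry [FiniteDimensional 𝕜 V] (U : V →ₗᵢ[𝕜] V) :
    IsSemisimple (U.toLinearMap : Module.End 𝕜 V) := by
  refine isSemisimple_iff.2 fun p hp => ⟨pᗮ, fun v hv => ?_, p.isCompl_orthogonal⟩
  have hmap : p.map U.toLinearMap = p :=
    Submodule.eq_of_le_of_finrank_eq (Submodule.map_le_iff_le_comap.2 hp)
      (p.equivMapOfInjective U.toLinearMap U.injective).finrank_eq.symm
  rw [Submodule.mem_comap, Submodule.mem_orthogonal, ← hmap]
  rintro _ ⟨w, hw, rfl⟩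
  exact (U.inner_map_map w v).trans (p.mem_orthogonal v |>.1 hv w hw)

theorem norm_eq_one_of_linearIsometry_eq_smul {U : V →ₗᵢ[𝕜] V} {z : 𝕜} {v : V} (hv : v ≠ 0)
    (h : U v = z • v) : ‖z‖ = 1 := by
  have := U.norm_map v
  rw [h, norm_smul] at this
  exact (mul_eq_right₀ (norm_ne_zero_iff.2 hv)).1 this

theorem orthogonalFamily_eigenspace_of_linearIsometry (U : V →ₗᵢ[𝕜] V) :
    OrthogonalFamily 𝕜 (fun z => eigenspace (U.toLinearMap : Module.End 𝕜 V) z)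
      fun z => (eigenspace (U.toLinearMap : Module.End 𝕜 V) z).subtypeₗᵢ := by
  rintro z w hzw ⟨u, hu⟩ ⟨v, hv⟩
  replace hu : U u = z • u := mem_eigenspace_iff.1 hu
  replace hv : U v = w • v := mem_eigenspace_iff.1 hv
  change inner 𝕜 u v = 0
  by_contra huv
  have hz : ‖z‖ = 1 := norm_eq_one_of_linearIsometry_eq_smul (fun h => huv (by simp [h])) hu
  have hinner : (starRingEnd 𝕜 z * w) * inner 𝕜 u v = inner 𝕜 u v := by
    rw [mul_assoc, ← inner_smul_right, ← inner_smul_left, ← hu, ← hv, U.inner_map_map]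
  have hzw' : starRingEnd 𝕜 z * w = 1 := (mul_eq_right₀ huv).1 hinner
  have hz' : z * starRingEnd 𝕜 z = 1 := by simp [RCLike.mul_conj, hz]
  exact hzw (left_inv_eq_right_inv hz' hzw')

theorem inner_pow_sum_eigenvectors (U : V →ₗᵢ[𝕜] V) {e : 𝕜 → V} (he : ∀ z, U (e z) = z • e z)
    (s : Finset 𝕜) (i j : ℕ) :
    inner 𝕜 ((U.toLinearMap ^ i) (∑ z ∈ s, e z)) ((U.toLinearMap ^ j) (∑ z ∈ s, e z)) =
      ∑ z ∈ s, starRingEnd 𝕜 (z ^ i) * z ^ j * (‖e z‖ : 𝕜) ^ 2 := by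
  have hpow (k : ℕ) (z : 𝕜) : (U.toLinearMap ^ k) (e z) = z ^ k • e z := by
    induction k with
    | zero => simp
    | succ k ih => simp [pow_succ', Module.End.mul_apply, ih, he, smul_smul, mul_comm]
  let v (k : ℕ) (z : 𝕜) : eigenspace (U.toLinearMap : Module.End 𝕜 V) z :=
    ⟨z ^ k • e z, Submodule.smul_mem _ _ (mem_eigenspace_iff.2 (he z))⟩
  simp only [map_sum, hpow]
  refine ((orthogonalFamily_eigenspace_of_linearIsometry U).inner_sum (v i) (v j) s).trans
    (Finset.sum_congr rfl fun z _ => ?_)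
  rw [Submodule.coe_inner, inner_smul_left, inner_smul_right, inner_self_eq_norm_sq_to_K, mul_assoc]

end InnerProductSpace

theorem exists_finsupp_eigenvectors_of_linearIsometry {V : Type*} [NormedAddCommGroup V]
    [InnerProductSpace ℂ V] [FiniteDimensional ℂ V] (U : V →ₗᵢ[ℂ] V) (v : V) :
    ∃ e : ℂ →₀ V, (∀ z, U (e z) = z • e z) ∧ ∑ z ∈ e.support, e z = v := by
  have hv : v ∈ ⨆ z : ℂ, Module.End.eigenspace (U.toLinearMap : Module.End ℂ V) z := by
    rw [(isSemisimple_of_linearIsometry U).iSup_eigenspace_eq_top]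
    trivial
  obtain ⟨e, he, hev⟩ := (Submodule.mem_iSup_iff_exists_finsupp _ _).1 hv
  exact ⟨e, fun z => Module.End.mem_eigenspace_iff.1 (he z), hev⟩

section TrigonometricPolynomial

open Polynomial
open scoped ComplexConjugate

variable {m : ℕ} {T : ℝ}

theorem fourier_neg_one_pow (n : ℕ) (t : AddCircle T) :
    fourier (-1) t ^ n = fourier (-(n : ℤ)) t := by
  simp [fourier_apply, AddCircle.toCircle_neg, AddCircle.toCircle_nsmul]

theorem fourier_neg_natCast_sub (i j : ℕ) (t : AddCircle T) :
    fourier (-((j : ℤ) - i)) t = conj (fourier (-1) t ^ i) * fourier (-1) t ^ j := by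
  rw [fourier_neg_one_pow, fourier_neg_one_pow, ← fourier_neg, ← fourier_add, neg_neg, neg_sub,
    sub_eq_add_neg]

theorem fourier_neg_one_injective (hT : T ≠ 0) :
    Function.Injective fun t : AddCircle T => fourier (-1) t := by
  intro s t hst
  simp only [fourier_neg, fourier_one] at hst
  exact AddCircle.injective_toCircle hT (Subtype.ext ((starRingEnd ℂ).injective hst))

theorem exists_fourier_neg_one_eq (hT : T ≠ 0) {z : ℂ} (hz : ‖z‖ = 1) :
    ∃ t : AddCircle T, fourier (-1) t = z := by
  obtain ⟨t, ht⟩ := (AddCircle.homeomorphCircle hT).surjective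
    (⟨z, mem_sphere_zero_iff_norm.2 hz⟩ : Circle)
  refine ⟨-t, ?_⟩
  rw [AddCircle.homeomorphCircle_apply] at ht
  simp [fourier_apply, ht]

/-- The trigonometric polynomial `∑ j < m, c j * e^{-2πijt/T}`, linear in its coefficients `c`. -/
def trigPoly (m : ℕ) (T : ℝ) : (Fin m → ℂ) →ₗ[ℂ] AddCircle T → ℂ :=
  Fintype.linearCombination ℂ fun (j : Fin m) t => fourier (-1) t ^ (j : ℕ)

theorem trigPoly_apply (c : Fin m → ℂ) (t : AddCircle T) :
    trigPoly m T c t = ∑ j, c j * fourier (-1) t ^ (j : ℕ) := by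
  simp [trigPoly, Fintype.linearCombination_apply]

theorem continuous_trigPoly (c : Fin m → ℂ) : Continuous (trigPoly m T c) := by
  simp only [funext (trigPoly_apply c)]
  fun_prop

theorem trigPoly_degreeLTEquiv (p : degreeLT ℂ m) (t : AddCircle T) :
    trigPoly m T (degreeLTEquiv ℂ m p) t = p.1.eval (fourier (-1) t) := by
  rw [trigPoly_apply, eval_eq_sum_degreeLTEquiv p.2]

theorem exists_eqOn_trigPoly (hT : T ≠ 0) {S : Finset (AddCircle T)} (hS : S.card ≤ m)
    (f : AddCircle T → ℂ) : ∃ c, Set.EqOn (trigPoly m T c) f S := by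
  have hz := (fourier_neg_one_injective hT).injOn (s := S)
  have hdeg := (Lagrange.degree_interpolate_lt f hz).trans_le (Nat.cast_le.2 hS)
  refine ⟨degreeLTEquiv ℂ m ⟨_, mem_degreeLT.2 hdeg⟩, fun t ht => ?_⟩
  rw [trigPoly_degreeLTEquiv]
  exact Lagrange.eval_interpolate_at_node f hz ht

theorem exists_finset_forall_notMem_trigPoly_ne_zero (hT : T ≠ 0) {c : Fin m → ℂ} (hc : c ≠ 0) :
    ∃ S : Finset (AddCircle T), S.card < m ∧ ∀ t ∉ S, trigPoly m T c t ≠ 0 := by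
  obtain ⟨p, rfl⟩ := (degreeLTEquiv ℂ m).surjective c
  have hp : p.1 ≠ 0 := by simpa using hc
  have hz := fourier_neg_one_injective hT
  let S := p.1.roots.toFinset.preimage _ hz.injOn
  refine ⟨S, ?_, fun t ht h => ht ?_⟩
  · calc S.card ≤ p.1.roots.toFinset.card :=
          Finset.card_le_card_of_injOn _ (fun t => Finset.mem_preimage.1) hz.injOn
      _ ≤ p.1.natDegree := p.1.roots.toFinset_card_le.trans p.1.card_roots'
      _ < m := (natDegree_lt_iff_degree_lt hp).2 (mem_degreeLT.1 p.2)
  · rw [trigPoly_degreeLTEquiv] at h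
    exact Finset.mem_preimage.2 (Multiset.mem_toFinset.2 (mem_roots'.2 ⟨hp, h⟩))

end TrigonometricPolynomial

section TrigonometricMoments

open scoped ComplexConjugate

variable {T : ℝ} {n : ℕ} {y : ℤ → ℂ} {μ ν : Measure (AddCircle T)}

/-- `μ` solves the truncated trigonometric moment problem with data `y_{-n}, …, y_n`. -/
def HasTrigMoments (n : ℕ) (y : ℤ → ℂ) (μ : Measure (AddCircle T)) : Prop :=
  ∀ k : ℤ, |k| ≤ n → ∫ t, fourier (-k) t ∂μ = y k

variable [hT : Fact (0 < T)]

/-- The spectral measure of a finite-dimensional isometry `U` at the vector `v`. -/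
theorem exists_measure_integral_fourier_eq_inner {V : Type*} [NormedAddCommGroup V]
    [InnerProductSpace ℂ V] [FiniteDimensional ℂ V] (U : V →ₗᵢ[ℂ] V) (v : V) :
    ∃ μ : Measure (AddCircle T), IsFiniteMeasure μ ∧ ∀ i j : ℕ,
      ∫ t, fourier (-((j : ℤ) - i)) t ∂μ =
        inner ℂ ((U.toLinearMap ^ i) v) ((U.toLinearMap ^ j) v) := by
  obtain ⟨e, he, rfl⟩ := exists_finsupp_eigenvectors_of_linearIsometry U v
  choose! θ hθ using fun (z : ℂ) (hz : ‖z‖ = 1) => exists_fourier_neg_one_eq (T := T) hT.out.ne' hz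
  refine ⟨∑ z ∈ e.support, (‖e z‖₊ ^ 2) • Measure.dirac (θ z), inferInstance, fun i j => ?_⟩
  rw [inner_pow_sum_eigenvectors U he, integral_finsetSum_measure fun z _ =>
    integrable_of_continuous (fourier _).continuous]
  refine Finset.sum_congr rfl fun z hz => ?_
  rw [integral_smul_nnreal_measure, integral_dirac, fourier_neg_natCast_sub,
    hθ z (norm_eq_one_of_linearIsometry_eq_smul (Finsupp.mem_support_iff.1 hz) (he z))]
  simp [NNReal.smul_def, mul_comm]

/-- The Carathéodory–Toeplitz theorem. A factorization `y (j - i) = ⟪v i, v j⟫` makes the shift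
`v i ↦ v (i + 1)` an isometry, whose spectral measure at `v 0` has the moments `y`. -/
theorem exists_hasTrigMoments_of_posSemidef (hy : (Ty n y).PosSemidef) :
    ∃ μ : Measure (AddCircle T), IsFiniteMeasure μ ∧ HasTrigMoments n y μ := by
  obtain ⟨v, hv⟩ := exists_gram_eq_of_posSemidef hy
  have hinner (i j : Fin (n + 1)) : inner ℂ (v i) (v j) = y ((j : ℤ) - i) := congrFun₂ hv i j
  have hshift : gram ℂ (fun i : Fin n => v i.castSucc) = gram ℂ fun i : Fin n => v i.succ := by
    ext i j
    simp [gram_apply, hinner]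
  obtain ⟨U, hU⟩ := exists_linearIsometry_of_gram_eq hshift
  have hpow (i : Fin (n + 1)) : (U.toLinearMap ^ (i : ℕ)) (v 0) = v i := by
    induction i using Fin.induction with
    | zero => simp
    | succ i ih =>
      rw [Fin.val_succ, pow_succ', Module.End.mul_apply]
      exact (congrArg U ih).trans (hU i)
  obtain ⟨μ, hμ, hmom⟩ := exists_measure_integral_fourier_eq_inner (T := T) U (v 0)
  refine ⟨μ, hμ, fun k hk => ?_⟩
  obtain ⟨i, j, rfl⟩ : ∃ i j : Fin (n + 1), (j : ℤ) - i = k := by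
    rw [abs_le] at hk
    exact ⟨⟨(-k).toNat, by lia⟩, ⟨k.toNat, by lia⟩, by simp⟩
  rw [hmom, hpow, hpow, hinner]

theorem HasTrigMoments.Ty_mulVec_apply [IsFiniteMeasure μ] (hμ : HasTrigMoments n y μ)
    (c : Fin (n + 1) → ℂ) (i : Fin (n + 1)) :
    (Ty n y *ᵥ c) i = ∫ t, conj (fourier (-1) t ^ (i : ℕ)) * trigPoly (n + 1) T c t ∂μ := by
  have hentry (j : Fin (n + 1)) :
      Ty n y i j = ∫ t, conj (fourier (-1) t ^ (i : ℕ)) * fourier (-1) t ^ (j : ℕ) ∂μ := by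
    simp only [← fourier_neg_natCast_sub]
    exact (hμ _ (abs_le.2 (by grind))).symm
  simp only [mulVec, dotProduct, hentry, ← integral_mul_const, trigPoly_apply, Finset.mul_sum]
  rw [integral_finsetSum _ fun j _ => integrable_of_continuous (by fun_prop)]
  simp only [mul_assoc, mul_comm (c _)]

theorem HasTrigMoments.dotProduct_Ty_mulVec [IsFiniteMeasure μ] (hμ : HasTrigMoments n y μ)
    (c : Fin (n + 1) → ℂ) :
    star c ⬝ᵥ Ty n y *ᵥ c = ∫ t, ‖trigPoly (n + 1) T c t‖ ^ 2 ∂μ := by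
  have hint (i : Fin (n + 1)) : Integrable
      (fun t => star c i * (conj (fourier (-1) t ^ (i : ℕ)) * trigPoly (n + 1) T c t)) μ :=
    integrable_of_continuous (by have := continuous_trigPoly (T := T) c; fun_prop)
  simp only [dotProduct, hμ.Ty_mulVec_apply, ← integral_const_mul]
  rw [← integral_finsetSum _ fun i _ => hint i, ← integral_complex_ofReal]
  congr 1 with t
  rw [ofReal_pow, ← conj_mul', trigPoly_apply c t, map_sum, Finset.sum_mul]
  simp only [map_mul, mul_assoc, Pi.star_apply, starRingEnd_apply]

theorem HasTrigMoments.Ty_mulVec_eq_zero_iff [IsFiniteMeasure μ] (hμ : HasTrigMoments n y μ)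
    {c : Fin (n + 1) → ℂ} : Ty n y *ᵥ c = 0 ↔ trigPoly (n + 1) T c =ᵐ[μ] 0 := by
  refine ⟨fun h => ?_, fun h => ?_⟩
  · have hint : ∫ t, ‖trigPoly (n + 1) T c t‖ ^ 2 ∂μ = 0 := by
      rw [← ofReal_eq_zero, ← hμ.dotProduct_Ty_mulVec, h, dotProduct_zero]
    have hae := (integral_eq_zero_iff_of_nonneg (fun _ => sq_nonneg _)
      (integrable_of_continuous ((continuous_trigPoly c).norm.pow 2))).1 hint
    filter_upwards [hae] with t ht
    simpa using ht
  · ext i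
    rw [hμ.Ty_mulVec_apply]
    refine integral_eq_zero_of_ae ?_
    filter_upwards [h] with t ht
    simp [ht]

theorem exists_finset_forall_measure_compl_eq_zero (hr : (Ty n y).rank ≤ n) :
    ∃ S : Finset (AddCircle T), S.card ≤ n ∧ ∀ μ : Measure (AddCircle T), IsFiniteMeasure μ →
      HasTrigMoments n y μ → μ (S : Set (AddCircle T))ᶜ = 0 := by
  obtain ⟨c, hc, hyc⟩ : ∃ c ≠ 0, Ty n y *ᵥ c = 0 :=
    exists_mulVec_eq_zero_of_rank_lt (by rwa [Fintype.card_fin, Nat.lt_succ_iff])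
  obtain ⟨S, hS, hzero⟩ := exists_finset_forall_notMem_trigPoly_ne_zero hT.out.ne' hc
  refine ⟨S, Nat.lt_succ_iff.1 hS, fun μ _ hμ => ?_⟩
  exact measure_mono_null hzero (hμ.Ty_mulVec_eq_zero_iff.1 hyc)

theorem HasTrigMoments.eq_of_measure_compl_eq_zero [IsFiniteMeasure μ] [IsFiniteMeasure ν]
    (hμ : HasTrigMoments n y μ) (hν : HasTrigMoments n y ν) {S : Finset (AddCircle T)}
    (hS : S.card ≤ n + 1) (hμS : μ (S : Set (AddCircle T))ᶜ = 0)
    (hνS : ν (S : Set (AddCircle T))ᶜ = 0) : μ = ν := by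
  ext A hA
  obtain ⟨c, hc⟩ := exists_eqOn_trigPoly hT.out.ne' hS (A.indicator 1)
  have hreal (ρ : Measure (AddCircle T)) [IsFiniteMeasure ρ] (hρ : HasTrigMoments n y ρ)
      (hρS : ρ (S : Set (AddCircle T))ᶜ = 0) : (ρ.real A : ℂ) = (Ty n y *ᵥ c) 0 := by
    have hae : trigPoly (n + 1) T c =ᵐ[ρ] A.indicator 1 := by
      filter_upwards [show ∀ᵐ t ∂ρ, t ∈ S from hρS] with t ht using hc ht
    simp [hρ.Ty_mulVec_apply, integral_congr_ae hae, integral_indicator hA]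
  exact (measureReal_eq_measureReal_iff).1
    (ofReal_injective ((hreal μ hμ hμS).trans (hreal ν hν hνS).symm))

theorem HasTrigMoments.rank_Ty_eq_card [IsFiniteMeasure μ] (hμ : HasTrigMoments n y μ)
    {S : Finset (AddCircle T)} (hcard : S.card ≤ n + 1) (hS : μ (S : Set (AddCircle T))ᶜ = 0)
    (hatom : ∀ x ∈ S, μ {x} ≠ 0) : (Ty n y).rank = S.card := by
  let evalS : (Fin (n + 1) → ℂ) →ₗ[ℂ] S → ℂ := LinearMap.funLeft ℂ ℂ (↑) ∘ₗ trigPoly (n + 1) T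
  have hker : (Ty n y).mulVecLin.ker = evalS.ker := by
    ext c
    simp only [LinearMap.mem_ker, mulVecLin_apply, hμ.Ty_mulVec_eq_zero_iff, Filter.EventuallyEq,
      ae_iff_forall_mem_atoms hS hatom]
    simp [evalS, funext_iff, LinearMap.funLeft_apply]
  have hsurj : Function.Surjective evalS := fun f => by
    obtain ⟨c, hc⟩ := exists_eqOn_trigPoly hT.out.ne' hcard (Function.extend (↑) f 0)
    exact ⟨c, funext fun x => (hc x.2).trans (Subtype.val_injective.extend_apply f 0 x)⟩
  rw [Matrix.rank, finrank_range_eq_of_ker_eq hker, LinearMap.range_eq_top.2 hsurj, finrank_top]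
  simp

theorem HasTrigMoments.eq_of_rank_le [IsFiniteMeasure μ] [IsFiniteMeasure ν]
    (hμ : HasTrigMoments n y μ) (hν : HasTrigMoments n y ν) (hr : (Ty n y).rank ≤ n) : μ = ν := by
  obtain ⟨S, hcard, hS⟩ := exists_finset_forall_measure_compl_eq_zero (T := T) hr
  exact hμ.eq_of_measure_compl_eq_zero hν (by lia) (hS μ ‹_› hμ) (hS ν ‹_› hν)

theorem HasTrigMoments.exists_atoms [IsFiniteMeasure μ] (hμ : HasTrigMoments n y μ)
    (hr : (Ty n y).rank ≤ n) : ∃ S : Finset (AddCircle T),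
      S.card = (Ty n y).rank ∧ μ (S : Set (AddCircle T))ᶜ = 0 ∧ ∀ x ∈ S, μ {x} ≠ 0 := by
  obtain ⟨S, hcard, hS⟩ := exists_finset_forall_measure_compl_eq_zero (T := T) hr
  obtain ⟨R, hRS, hR, hatom⟩ := exists_subset_atoms_of_measure_compl_eq_zero (hS μ ‹_› hμ)
  have hRcard : R.card ≤ n + 1 := by have := Finset.card_le_card hRS; lia
  exact ⟨R, (hμ.rank_Ty_eq_card hRcard hR hatom).symm, hR, hatom⟩

end TrigonometricMoments

theorem toJordanDecomposition_toSignedMeasure {α : Type*} [MeasurableSpace α] (μ : Measure α)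
    [IsFiniteMeasure μ] : μ.toSignedMeasure.toJordanDecomposition =
      ⟨μ, 0, Measure.MutuallySingular.zero_right⟩ :=
  SignedMeasure.toJordanDecomposition_eq (by simp [JordanDecomposition.toSignedMeasure])

theorem toSignedMeasure_posPart_of_negPart_eq_zero {α : Type*} [MeasurableSpace α]
    {w : SignedMeasure α} (hw : w.toJordanDecomposition.negPart = 0) :
    w.toJordanDecomposition.posPart.toSignedMeasure = w := by
  conv_rhs => rw [← w.toSignedMeasure_toJordanDecomposition, JordanDecomposition.toSignedMeasure]
  simp [hw]

section BPC

variable {Kc : ℕ} {y : ℤ → ℂ} {μ : Measure Circle2pi} {w : SignedMeasure Circle2pi}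

theorem feasible_toSignedMeasure_iff [IsFiniteMeasure μ] :
    Feasible Kc y μ.toSignedMeasure ↔ HasTrigMoments Kc y μ := by
  simp [Feasible, HasTrigMoments, sFourierCoeff, toJordanDecomposition_toSignedMeasure]

theorem Feasible.tvNorm_eq (hw : Feasible Kc y w) :
    tvNorm w = (y 0).re + 2 * w.toJordanDecomposition.negPart.real Set.univ := by
  have hmass : w.toJordanDecomposition.posPart.real Set.univ -
      w.toJordanDecomposition.negPart.real Set.univ = (y 0).re := by
    rw [← hw 0 (by simp)]
    simp [sFourierCoeff]
  have htv : tvNorm w = w.toJordanDecomposition.posPart.real Set.univ +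
      w.toJordanDecomposition.negPart.real Set.univ :=
    ENNReal.toReal_add (measure_ne_top _ _) (measure_ne_top _ _)
  linarith

theorem isBPCSolution_iff_exists_toSignedMeasure [IsFiniteMeasure μ] (hμ : HasTrigMoments Kc y μ) :
    IsBPCSolution Kc y w ↔ ∃ (ν : Measure Circle2pi) (_ : IsFiniteMeasure ν),
      HasTrigMoments Kc y ν ∧ w = ν.toSignedMeasure := by
  have htv (ν : Measure Circle2pi) [IsFiniteMeasure ν] (hν : HasTrigMoments Kc y ν) :
      tvNorm ν.toSignedMeasure = (y 0).re := by
    simp [(feasible_toSignedMeasure_iff.2 hν).tvNorm_eq, toJordanDecomposition_toSignedMeasure]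
  refine ⟨fun hw => ?_, ?_⟩
  · have hle := hw.2 _ (feasible_toSignedMeasure_iff.2 hμ)
    rw [hw.1.tvNorm_eq, htv μ hμ] at hle
    have hneg : w.toJordanDecomposition.negPart = 0 := by
      rw [← Measure.measure_univ_eq_zero, ← measureReal_eq_zero_iff]
      exact le_antisymm (by linarith) measureReal_nonneg
    have hpos := toSignedMeasure_posPart_of_negPart_eq_zero hneg
    exact ⟨_, inferInstance, feasible_toSignedMeasure_iff.1 (hpos.symm ▸ hw.1), hpos.symm⟩
  · rintro ⟨ν, _, hν, rfl⟩
    refine ⟨feasible_toSignedMeasure_iff.2 hν, fun v hv => ?_⟩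
    rw [htv ν hν, hv.tvNorm_eq]
    exact le_add_of_nonneg_right (by positivity)

theorem Ty_neg (Kc : ℕ) (y : ℤ → ℂ) : Ty Kc (-y) = -Ty Kc y := rfl

theorem Feasible.neg (hw : Feasible Kc y w) : Feasible Kc (-y) (-w) := fun k hk => by
  simp [← hw k hk, sFourierCoeff, SignedMeasure.toJordanDecomposition_neg]

theorem IsBPCSolution.neg (hw : IsBPCSolution Kc y w) : IsBPCSolution Kc (-y) (-w) := by
  have htv (v : SignedMeasure Circle2pi) : tvNorm (-v) = tvNorm v := by
    rw [tvNorm, SignedMeasure.totalVariation_neg, tvNorm]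
  refine ⟨hw.1.neg, fun v hv => ?_⟩
  rw [htv, ← htv v]
  exact hw.2 _ (by simpa using hv.neg)

theorem existsUnique_isBPCSolution_of_posSemidef (hT : (Ty Kc y).PosSemidef)
    (hr : (Ty Kc y).rank ≤ Kc) :
    ∃ w' : SignedMeasure Circle2pi,
      IsBPCSolution Kc y w' ∧
      (∀ w : SignedMeasure Circle2pi, IsBPCSolution Kc y w → w = w') ∧
      ∃ (x : Fin ((Ty Kc y).rank) → Circle2pi) (a : Fin ((Ty Kc y).rank) → ℝ),
        Function.Injective x ∧ (∀ i, 0 < a i) ∧ w' = ∑ i, a i • diracSM (x i) := by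
  obtain ⟨μ, _, hμ⟩ := exists_hasTrigMoments_of_posSemidef (T := 2 * π) hT
  obtain ⟨S, hcard, hS, hatom⟩ := hμ.exists_atoms hr
  refine ⟨μ.toSignedMeasure,
    (isBPCSolution_iff_exists_toSignedMeasure hμ).2 ⟨μ, ‹_›, hμ, rfl⟩, fun w hw => ?_, ?_⟩
  · obtain ⟨ν, _, hν, rfl⟩ := (isBPCSolution_iff_exists_toSignedMeasure hμ).1 hw
    exact Measure.toSignedMeasure_congr (hν.eq_of_rank_le hμ hr)
  · let f : Fin (Ty Kc y).rank ≃ S := (S.equivFinOfCardEq hcard).symm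
    refine ⟨fun i => f i, fun i => μ.real {(f i : Circle2pi)},
      Subtype.val_injective.comp f.injective,
      fun i => ENNReal.toReal_pos (hatom _ (f i).2) (measure_ne_top _ _), ?_⟩
    rw [toSignedMeasure_eq_sum_smul_dirac hS, ← Finset.sum_coe_sort]
    exact (f.sum_comp fun x : S => μ.real {(x : Circle2pi)} • diracSM x).symm

end BPC

/-- If `T_y` is positive (resp. negative) semidefinite and rank deficient, then (BPC) has a
unique solution, composed of exactly `rank T_y` Dirac masses with strictly positive
(resp. strictly negative) weights at pairwise distinct points. -/
theorem unique_solution_of_Ty_semidef_rank_deficient (Kc : ℕ) (hKc : 1 ≤ Kc) (y : ℤ → ℂ)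
    (hsym : ∀ k : ℤ, |k| ≤ (Kc : ℤ) → y (-k) = starRingEnd ℂ (y k)) :
    ((Ty Kc y).PosSemidef → (Ty Kc y).rank ≤ Kc →
      ∃ w' : MeasureTheory.SignedMeasure Circle2pi,
        IsBPCSolution Kc y w' ∧
        (∀ w : MeasureTheory.SignedMeasure Circle2pi, IsBPCSolution Kc y w → w = w') ∧
        ∃ (x : Fin ((Ty Kc y).rank) → Circle2pi) (a : Fin ((Ty Kc y).rank) → ℝ),
          Function.Injective x ∧ (∀ i, 0 < a i) ∧ w' = ∑ i, a i • diracSM (x i)) ∧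
    ((-(Ty Kc y)).PosSemidef → (Ty Kc y).rank ≤ Kc →
      ∃ w' : MeasureTheory.SignedMeasure Circle2pi,
        IsBPCSolution Kc y w' ∧
        (∀ w : MeasureTheory.SignedMeasure Circle2pi, IsBPCSolution Kc y w → w = w') ∧
        ∃ (x : Fin ((Ty Kc y).rank) → Circle2pi) (a : Fin ((Ty Kc y).rank) → ℝ),
          Function.Injective x ∧ (∀ i, a i < 0) ∧ w' = ∑ i, a i • diracSM (x i)) := by
  refine ⟨existsUnique_isBPCSolution_of_posSemidef, fun hT hr => ?_⟩
  rw [← Ty_neg] at hT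
  have hrank : (Ty Kc (-y)).rank = (Ty Kc y).rank := by rw [Ty_neg, matrix_rank_neg]
  obtain ⟨w, hw, huniq, x, a, hx, ha, rfl⟩ :=
    existsUnique_isBPCSolution_of_posSemidef hT (hrank.trans_le hr)
  let e := finCongr hrank.symm
  refine ⟨_, by simpa only [neg_neg] using hw.neg, fun v hv => ?_, x ∘ e, -(a ∘ e),
    hx.comp e.injective, fun i => neg_lt_zero.2 (ha _), ?_⟩
  · exact neg_eq_iff_eq_neg.1 (huniq _ hv.neg)
  · rw [← e.sum_comp, ← Finset.sum_neg_distrib]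
    exact Finset.sum_congr rfl fun i _ => (neg_smul _ _).symm
end
end
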